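/- Let W_n, W ∈ L¹((0,1)²) be nonnegative and symmetric with sup_n ‖W_n‖_{L¹} < ∞ and ‖W_n − W‖_□ → 0, and let u_n : (0,1) → ℝ be measurable functions with sup_n ‖u_n‖_{L^∞} < ∞ such that the Young measures δ_{u_n} converge narrowly to a Young measure ν. Then the graph Dirichlet energies converge to the graphon Dirichlet energy: ∫₀¹∫₀¹ W_n(x,y) |u_n(x) − u_n(y)|² dx dy → ∫₀¹∫₀¹ W(x,y) ∫_ℝ∫_ℝ |λ−μ|² dν_x(λ) dν_y(μ) dx dy. -/

import Mathlib

open MeasureTheory Filter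

noncomputable section

/-- The open unit interval `(0,1)` as a subset of `ℝ`. -/
def I01 : Set ℝ := Set.Ioo 0 1

/-- A Young measure on `(0,1)`: a measurable family of Borel probability measures on `ℝ`
(a Markov kernel from `(0,1)` to `ℝ`). -/
def IsYoungMeasure (ν : ℝ → Measure ℝ) : Prop :=
  Measurable ν ∧ ∀ x, IsProbabilityMeasure (ν x)

/-- The Young measure associated with a measurable function `u`: `(δ_u)_x = δ_{u(x)}`. -/
def deltaYM (u : ℝ → ℝ) : ℝ → Measure ℝ := fun x => Measure.dirac (u x)

/-- Narrow convergence of Young measures. -/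
def NarrowConv (ν : ℕ → ℝ → Measure ℝ) (μ : ℝ → Measure ℝ) : Prop :=
  ∀ f : ℝ → ℝ, Continuous f → (∃ C, ∀ s, |f s| ≤ C) →
    ∀ g : ℝ → ℝ, IntegrableOn g I01 →
      Tendsto (fun n => ∫ x in I01, g x * ∫ t, f t ∂(ν n x)) atTop
        (nhds (∫ x in I01, g x * ∫ t, f t ∂(μ x)))

/-- The cut norm of a kernel `V ∈ L¹((0,1)²)`. -/
def cutNorm (V : ℝ → ℝ → ℝ) : ℝ :=
  sSup {r : ℝ | ∃ f g : ℝ → ℝ, Measurable f ∧ Measurable g ∧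
    (∀ x, f x ∈ Set.Icc (-1 : ℝ) 1) ∧ (∀ x, g x ∈ Set.Icc (-1 : ℝ) 1) ∧
    r = |∫ x in I01, ∫ y in I01, V x y * f x * g y|}

abbrev mu01 : Measure ℝ := volume.restrict I01

instance : IsFiniteMeasure mu01 := by
  constructor
  simp [mu01, I01]

lemma prod01 : (volume : Measure (ℝ × ℝ)).restrict (I01 ×ˢ I01) = mu01.prod mu01 := by
  rw [mu01, Measure.prod_restrict]; rfl

lemma int_tensor {W : ℝ → ℝ → ℝ} (hW : Integrable (Function.uncurry W) (mu01.prod mu01))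
    {f g : ℝ → ℝ} (hf : Measurable f) (hg : Measurable g) {A B : ℝ}
    (hA : ∀ x, |f x| ≤ A) (hB : ∀ x, |g x| ≤ B) :
    Integrable (fun z : ℝ × ℝ => W z.1 z.2 * f z.1 * g z.2) (mu01.prod mu01) := by
  have h1 : Integrable (fun z : ℝ × ℝ => W z.1 z.2 * f z.1) (mu01.prod mu01) :=
    Integrable.mul_bdd (f := fun z : ℝ × ℝ => W z.1 z.2) (c := A) hW
      (hf.comp measurable_fst).aestronglyMeasurable (ae_of_all _ fun z => hA z.1)
  exact Integrable.mul_bdd (c := B) h1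
      (hg.comp measurable_snd).aestronglyMeasurable (ae_of_all _ fun z => hB z.2)

lemma cut_bound {V : ℝ → ℝ → ℝ} (hV : Integrable (Function.uncurry V) (mu01.prod mu01))
    {f g : ℝ → ℝ} (hf : Measurable f) (hg : Measurable g) {A B : ℝ} (hA0 : 0 < A) (hB0 : 0 < B)
    (hA : ∀ x, |f x| ≤ A) (hB : ∀ x, |g x| ≤ B) :
    |∫ x in I01, ∫ y in I01, V x y * f x * g y| ≤ A * B * cutNorm V := by
  have key : |∫ x in I01, ∫ y in I01, V x y * (f x / A) * (g y / B)| ≤ cutNorm V := by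
    apply le_csSup
    · refine ⟨∫ z, |Function.uncurry V z| ∂(mu01.prod mu01), ?_⟩
      rintro r ⟨f, g, hf, hg, hf1, hg1, rfl⟩
      have hf2 : ∀ x, |f x| ≤ 1 := fun x => abs_le.2 (hf1 x)
      have hg2 : ∀ x, |g x| ≤ 1 := fun x => abs_le.2 (hg1 x)
      have hi := int_tensor hV hf hg hf2 hg2
      rw [← integral_prod (fun z : ℝ × ℝ => V z.1 z.2 * f z.1 * g z.2) hi]
      refine (abs_integral_le_integral_abs).trans ?_
      refine integral_mono hi.abs hV.abs ?_
      intro z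
      simp only [abs_mul, Function.uncurry]
      have := mul_le_mul (mul_le_mul_of_nonneg_left (hf2 z.1) (abs_nonneg (V z.1 z.2)))
        (hg2 z.2) (abs_nonneg _) (by positivity)
      simpa using this
    · refine ⟨fun x => f x / A, fun y => g y / B, hf.div_const _, hg.div_const _, ?_, ?_, rfl⟩
      · intro x
        apply abs_le.1
        rw [abs_div, abs_of_pos hA0]; exact (div_le_one hA0).2 (hA x)
      · intro x
        apply abs_le.1
        rw [abs_div, abs_of_pos hB0]; exact (div_le_one hB0).2 (hB x)
  have e : ∫ x in I01, ∫ y in I01, V x y * f x * g y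
      = (A * B) * ∫ x in I01, ∫ y in I01, V x y * (f x / A) * (g y / B) := by
    rw [← integral_const_mul]
    congr 1; ext x
    rw [← integral_const_mul]
    congr 1; ext y
    field_simp
  rw [e, abs_mul, abs_of_pos (mul_pos hA0 hB0)]
  exact mul_le_mul_of_nonneg_left key (mul_pos hA0 hB0).le

lemma ym_meas {ν : ℝ → Measure ℝ} (hν : IsYoungMeasure ν) {f : ℝ → ℝ} (hf : Continuous f) :
    Measurable (fun x => ∫ t, f t ∂(ν x)) := by
  let κ : ProbabilityTheory.Kernel ℝ ℝ := ⟨ν, hν.1⟩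
  exact (StronglyMeasurable.integral_kernel (κ := κ) hf.stronglyMeasurable).measurable

lemma ym_bd {ν : ℝ → Measure ℝ} (hν : IsYoungMeasure ν) {f : ℝ → ℝ} {A : ℝ}
    (hA : ∀ x, |f x| ≤ A) (x : ℝ) : |∫ t, f t ∂(ν x)| ≤ A := by
  have := hν.2 x
  simpa using norm_integral_le_of_norm_le_const (μ := ν x) (f := f) (C := A) (ae_of_all _ hA)

lemma tensor_conv {W : ℝ → ℝ → ℝ} (hW : Integrable (Function.uncurry W) (mu01.prod mu01))
    {u : ℕ → ℝ → ℝ} (hu : ∀ n, Measurable (u n))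
    {ν : ℝ → Measure ℝ} (hν : IsYoungMeasure ν)
    (hnarrow : NarrowConv (fun n => deltaYM (u n)) ν)
    {f g : ℝ → ℝ} (hf : Continuous f) (hg : Continuous g) {A B : ℝ}
    (hA : ∀ x, |f x| ≤ A) (hB : ∀ x, |g x| ≤ B) :
    Tendsto (fun n => ∫ x in I01, ∫ y in I01, W x y * f (u n x) * g (u n y)) atTop
      (nhds (∫ x in I01, ∫ y in I01, W x y * (∫ t, f t ∂(ν x)) * (∫ t, g t ∂(ν y)))) := by
  set F : ℝ → ℝ := fun x => ∫ t, f t ∂(ν x) with hF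
  set G : ℝ → ℝ := fun x => ∫ t, g t ∂(ν x) with hG
  have hGm : Measurable G := ym_meas hν hg
  have hGB : ∀ x, |G x| ≤ B := ym_bd hν hB
  have hA0 : 0 ≤ A := (abs_nonneg _).trans (hA 0)
  have hB0 : 0 ≤ B := (abs_nonneg _).trans (hB 0)
  have nar : ∀ f : ℝ → ℝ, Continuous f → (∃ C, ∀ s, |f s| ≤ C) →
    ∀ g : ℝ → ℝ, Integrable g mu01 →
      Tendsto (fun n => ∫ x in I01, g x * f (u n x)) atTop
        (nhds (∫ x in I01, g x * ∫ t, f t ∂(ν x))) := by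
    intro f hf hb g hg
    have := hnarrow f hf hb g hg
    simpa [deltaYM] using this
  let h : ℕ → ℝ → ℝ := fun n x => ∫ y in I01, W x y * g (u n y)
  let h' : ℝ → ℝ := fun x => ∫ y in I01, W x y * G y
  have h1i : ∀ k : ℝ → ℝ, Measurable k → (∀ x, |k x| ≤ B) →
      Integrable (fun z : ℝ × ℝ => W z.1 z.2 * k z.2) (mu01.prod mu01) := by
    intro k hk hkB
    simpa using int_tensor hW (f := fun _ => 1) measurable_const hk (A := 1) (by simp) hkB
  have hi : ∀ n, Integrable (h n) mu01 := fun n =>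
    (h1i _ (hg.measurable.comp (hu n)) (fun x => hB _)).integral_prod_left
  have hi' : Integrable h' mu01 := (h1i _ hGm hGB).integral_prod_left
  have hWx : ∀ᵐ x ∂mu01, Integrable (fun y => W x y) mu01 := hW.prod_right_ae
  have hpt : ∀ᵐ x ∂mu01, Tendsto (fun n => h n x) atTop (nhds (h' x)) := by
    filter_upwards [hWx] with x hx
    exact nar g hg ⟨B, hB⟩ _ hx
  have hkbd : ∀ k : ℝ → ℝ, (∀ x, |k x| ≤ B) → ∀ x, Integrable (fun y => W x y) mu01 →
      |∫ y in I01, W x y * k y| ≤ B * ∫ y in I01, |W x y| := by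
    intro k hkB x hx
    rw [← integral_const_mul]
    rw [← Real.norm_eq_abs]
    refine norm_integral_le_of_norm_le (f := fun y => W x y * k y) (hx.abs.const_mul B)
      (ae_of_all _ fun y => ?_)
    rw [Real.norm_eq_abs, abs_mul, mul_comm]
    exact mul_le_mul_of_nonneg_right (hkB y) (abs_nonneg _)
  have hbd : Integrable (fun x => B * ∫ y in I01, |W x y|) mu01 :=
    (Integrable.integral_prod_left (f := fun z : ℝ × ℝ => |W z.1 z.2|) hW.abs).const_mul B
  have hT : Tendsto (fun n => ∫ x in I01, (h n x - h' x) * f (u n x)) atTop (nhds 0) := by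
    have := tendsto_integral_of_dominated_convergence (μ := mu01)
      (F := fun n x => (h n x - h' x) * f (u n x)) (f := fun _ => 0)
      (fun x => (B * (∫ y in I01, |W x y|) + B * ∫ y in I01, |W x y|) * A)
      (fun n => ((hi n).sub hi').aestronglyMeasurable.mul
        (hf.measurable.comp (hu n)).aestronglyMeasurable)
      ((hbd.add hbd).mul_const A) ?_ ?_
    · simpa using this
    · intro n
      filter_upwards [hWx] with x hx
      rw [Real.norm_eq_abs, abs_mul]
      have a1 := hkbd (fun y => g (u n y)) (fun x => hB _) x hx
      have a2 := hkbd G hGB x hx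
      refine mul_le_mul ((abs_sub _ _).trans (add_le_add a1 a2)) (hA _) (abs_nonneg _) ?_
      exact add_nonneg ((abs_nonneg _).trans a1) ((abs_nonneg _).trans a1)
    · filter_upwards [hpt] with x hx
      have h0 : Tendsto (fun n => |h n x - h' x| * A) atTop (nhds 0) := by
        have := ((hx.sub_const (h' x)).abs).mul_const A
        simpa using this
      refine squeeze_zero_norm (fun n => ?_) h0
      rw [Real.norm_eq_abs, abs_mul]
      exact mul_le_mul_of_nonneg_left (hA _) (abs_nonneg _)
  have hS := hT.add (nar f hf ⟨A, hA⟩ h' hi')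
  rw [zero_add] at hS
  have e1 : (∫ x in I01, h' x * ∫ t, f t ∂(ν x)) =
      ∫ x in I01, ∫ y in I01, W x y * F x * G y := by
    congr 1; ext x
    rw [← integral_mul_const]
    congr 1; ext y
    simp only [hF]; ring
  rw [← e1]
  refine hS.congr fun n => ?_
  have bi : ∀ k : ℝ → ℝ, Integrable k mu01 → Integrable (fun x => k x * f (u n x)) mu01 :=
    fun k hk => hk.mul_bdd (c := A) (hf.measurable.comp (hu n)).aestronglyMeasurable
      (ae_of_all _ fun x => hA _)
  rw [← integral_add (bi (fun x => h n x - h' x) ((hi n).sub hi')) (bi _ hi')]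
  congr 1; ext x
  rw [← add_mul, sub_add_cancel, ← integral_mul_const]
  congr 1; ext y
  ring

lemma tensor_conv' {Ws : ℕ → ℝ → ℝ → ℝ}
    (hWs : ∀ n, Integrable (Function.uncurry (Ws n)) (mu01.prod mu01))
    {W : ℝ → ℝ → ℝ} (hW : Integrable (Function.uncurry W) (mu01.prod mu01))
    (hcut : Tendsto (fun n => cutNorm (fun x y => Ws n x y - W x y)) atTop (nhds 0))
    {u : ℕ → ℝ → ℝ} (hu : ∀ n, Measurable (u n))
    {ν : ℝ → Measure ℝ} (hν : IsYoungMeasure ν)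
    (hnarrow : NarrowConv (fun n => deltaYM (u n)) ν)
    {f g : ℝ → ℝ} (hf : Continuous f) (hg : Continuous g) {A B : ℝ}
    (hA0 : 0 < A) (hB0 : 0 < B)
    (hA : ∀ x, |f x| ≤ A) (hB : ∀ x, |g x| ≤ B) :
    Tendsto (fun n => ∫ z : ℝ × ℝ, Ws n z.1 z.2 * f (u n z.1) * g (u n z.2) ∂(mu01.prod mu01))
      atTop (nhds (∫ z : ℝ × ℝ, W z.1 z.2 * (∫ t, f t ∂(ν z.1)) * (∫ t, g t ∂(ν z.2))
        ∂(mu01.prod mu01))) := by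
  have hl := tensor_conv hW hu hν hnarrow hf hg hA hB
  have h0 : Tendsto (fun n => ∫ x in I01, ∫ y in I01,
      (Ws n x y - W x y) * f (u n x) * g (u n y)) atTop (nhds 0) := by
    have h1 := hcut.const_mul (A * B)
    rw [mul_zero] at h1
    refine squeeze_zero_norm (fun n => ?_) h1
    exact cut_bound (V := fun x y => Ws n x y - W x y) ((hWs n).sub hW)
      (hf.measurable.comp (hu n)) (hg.measurable.comp (hu n)) hA0 hB0
      (fun x => hA _) (fun x => hB _)
  have hS := h0.add hl
  rw [zero_add] at hS
  rw [integral_prod (fun z : ℝ × ℝ => W z.1 z.2 * (∫ t, f t ∂(ν z.1)) * (∫ t, g t ∂(ν z.2)))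
    (int_tensor hW (ym_meas hν hf) (ym_meas hν hg) (ym_bd hν hA) (ym_bd hν hB))]
  refine hS.congr fun n => ?_
  have i1 := int_tensor (W := fun x y => Ws n x y - W x y) ((hWs n).sub hW)
      (hf.measurable.comp (hu n)) (hg.measurable.comp (hu n)) (fun x => hA _) (fun x => hB _)
  have i2 := int_tensor hW
      (hf.measurable.comp (hu n)) (hg.measurable.comp (hu n)) (fun x => hA _) (fun x => hB _)
  have e1 := integral_prod _ i1
  have e2 := integral_prod _ i2
  simp only [Function.comp_apply] at e1 e2
  rw [← e1, ← e2]
  have := integral_add i1 i2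
  simp only [Function.comp_apply] at this
  rw [← this]
  congr 1; ext z
  ring

lemma ym_quad {m : Measure ℝ} [IsProbabilityMeasure m] {q f : ℝ → ℝ} (hq : Integrable q m)
    (hf : Integrable f m) {c d : ℝ} :
    ∫ s, (q s + c - d * f s) ∂m = (∫ s, q s ∂m) + c - d * ∫ s, f s ∂m := by
  have i : Integrable (fun s => q s + c) m := hq.add (integrable_const c)
  rw [integral_sub i (hf.const_mul d), integral_add hq (integrable_const c), integral_const_mul]
  simp

lemma ym_supp {u : ℕ → ℝ → ℝ} {C : ℝ} (hub : ∀ n x, |u n x| ≤ C)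
    {ν : ℝ → Measure ℝ} (hν : IsYoungMeasure ν)
    (hnarrow : NarrowConv (fun n => deltaYM (u n)) ν) :
    ∀ᵐ x ∂mu01, ∀ᵐ s ∂(ν x), |s| ≤ C := by
  let f : ℝ → ℝ := fun s => min 1 (max (|s| - C) 0)
  have hf : Continuous f := by fun_prop
  have hf0 : ∀ s, 0 ≤ f s := fun s => le_min zero_le_one (le_max_right _ _)
  have hf1 : ∀ s, |f s| ≤ 1 := fun s => by
    rw [abs_of_nonneg (hf0 s)]; exact min_le_left _ _
  have h := hnarrow f hf ⟨1, hf1⟩ (fun _ => 1) (integrable_const (μ := mu01) (1 : ℝ))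
  have hz : ∀ n x, f (u n x) = 0 := fun n x => by
    simp only [f]
    rw [max_eq_right (by linarith [hub n x])]; simp
  simp only [deltaYM, integral_dirac, hz, one_mul, integral_zero] at h
  have h0 := tendsto_nhds_unique h tendsto_const_nhds
  have hint : Integrable (fun x => ∫ t, f t ∂(ν x)) mu01 :=
    Integrable.of_bound (ym_meas hν hf).aestronglyMeasurable 1 (ae_of_all _ (ym_bd hν hf1))
  have h2 := (integral_eq_zero_iff_of_nonneg (fun x => integral_nonneg hf0) hint).1 h0
  filter_upwards [h2] with x hx
  have := hν.2 x
  have hx' : Integrable f (ν x) :=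
    Integrable.of_bound hf.aestronglyMeasurable 1 (ae_of_all _ hf1)
  have h3 := (integral_eq_zero_iff_of_nonneg hf0 hx').1 hx
  filter_upwards [h3] with s hs
  by_contra hc
  push Not at hc
  have : 0 < f s := lt_min one_pos (lt_max_of_lt_left (by linarith))
  exact this.ne' hs

/-- Convergence of the graph Dirichlet energies to the graphon Dirichlet energy. -/
theorem dirichlet_energy_convergence
    (Wseq : ℕ → ℝ → ℝ → ℝ)
    (hWseqMeas : ∀ n, Measurable (Function.uncurry (Wseq n)))
    (hWseqNonneg : ∀ n x y, 0 ≤ Wseq n x y)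
    (hWseqSymm : ∀ n x y, Wseq n x y = Wseq n y x)
    (hWseqInt : ∀ n, IntegrableOn (Function.uncurry (Wseq n)) (I01 ×ˢ I01))
    (hWseqBd : ∃ C : ℝ, ∀ n, (∫ x in I01, ∫ y in I01, |Wseq n x y|) ≤ C)
    (W : ℝ → ℝ → ℝ) (hWmeas : Measurable (Function.uncurry W))
    (hWnonneg : ∀ x y, 0 ≤ W x y) (hWsymm : ∀ x y, W x y = W y x)
    (hWint : IntegrableOn (Function.uncurry W) (I01 ×ˢ I01))
    (hcut : Tendsto (fun n => cutNorm (fun x y => Wseq n x y - W x y)) atTop (nhds 0))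
    (u : ℕ → ℝ → ℝ) (hu : ∀ n, Measurable (u n))
    (hub : ∃ C : ℝ, ∀ n x, |u n x| ≤ C)
    (ν : ℝ → Measure ℝ) (hν : IsYoungMeasure ν)
    (hnarrow : NarrowConv (fun n => deltaYM (u n)) ν) :
    Tendsto
      (fun n => ∫ x in I01, ∫ y in I01, Wseq n x y * |u n x - u n y| ^ 2)
      atTop
      (nhds (∫ x in I01, ∫ y in I01,
        W x y * ∫ t, (∫ s, |s - t| ^ 2 ∂(ν x)) ∂(ν y))) := by
  have hWs : ∀ n, Integrable (Function.uncurry (Wseq n)) (mu01.prod mu01) := fun n => by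
    rw [← prod01]; exact hWseqInt n
  have hW : Integrable (Function.uncurry W) (mu01.prod mu01) := by
    rw [← prod01]; exact hWint
  obtain ⟨C₀, hC₀⟩ := hub
  obtain ⟨C, hC0, hC⟩ : ∃ C : ℝ, 0 < C ∧ ∀ n x, |u n x| ≤ C :=
    ⟨max C₀ 1, lt_max_of_lt_right one_pos, fun n x => (hC₀ n x).trans (le_max_left _ _)⟩
  let φ : ℝ → ℝ := fun s => max (-C) (min s C)
  have hφ : Continuous φ := by fun_prop
  have hφC : ∀ s, |φ s| ≤ C := fun s =>
    abs_le.2 ⟨le_max_left _ _, max_le (by linarith) (min_le_right _ _)⟩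
  have hφid : ∀ s, |s| ≤ C → φ s = s := fun s hs => by
    have := abs_le.1 hs
    simp only [φ]
    rw [min_eq_left this.2, max_eq_right this.1]
  have hq : Continuous (fun s => φ s ^ 2) := hφ.pow 2
  have hqC : ∀ s, |φ s ^ 2| ≤ C ^ 2 := fun s => by
    rw [abs_pow]; exact pow_le_pow_left₀ (abs_nonneg _) (hφC s) 2
  have h1 : Continuous (fun _ : ℝ => (1 : ℝ)) := continuous_const
  have h1C : ∀ s : ℝ, |(fun _ : ℝ => (1 : ℝ)) s| ≤ 1 := by simp
  have hC2 : 0 < C ^ 2 := by positivity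
  have T1 := tensor_conv' hWs hW hcut hu hν hnarrow hq h1 hC2 one_pos hqC h1C
  have T2 := tensor_conv' hWs hW hcut hu hν hnarrow h1 hq one_pos hC2 h1C hqC
  have T3 := tensor_conv' hWs hW hcut hu hν hnarrow hφ hφ hC0 hC0 hφC hφC
  have T := (T1.add T2).sub (T3.const_mul 2)
  have I : ∀ {V : ℝ → ℝ → ℝ} (_ : Integrable (Function.uncurry V) (mu01.prod mu01))
      {a b c d p q : ℝ → ℝ} (_ : Measurable a) (_ : Measurable b) (_ : Measurable c)
      (_ : Measurable d) (_ : Measurable p) (_ : Measurable q)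
      (_ : ∀ s, |a s| ≤ C ^ 2) (_ : ∀ s, |b s| ≤ 1) (_ : ∀ s, |c s| ≤ 1) (_ : ∀ s, |d s| ≤ C ^ 2)
      (_ : ∀ s, |p s| ≤ C) (_ : ∀ s, |q s| ≤ C),
      (∫ z : ℝ × ℝ, V z.1 z.2 * a z.1 * b z.2 ∂(mu01.prod mu01)) +
      (∫ z : ℝ × ℝ, V z.1 z.2 * c z.1 * d z.2 ∂(mu01.prod mu01)) -
      2 * (∫ z : ℝ × ℝ, V z.1 z.2 * p z.1 * q z.2 ∂(mu01.prod mu01)) =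
      ∫ x in I01, ∫ y in I01, V x y * (a x * b y + c x * d y - 2 * (p x * q y)) := by
    intro V hV a b c d p q ha hb hc hd hp hq ha' hb' hc' hd' hp' hq'
    have i1 := int_tensor hV ha hb ha' hb'
    have i2 := int_tensor hV hc hd hc' hd'
    have i3 := (int_tensor hV hp hq hp' hq').const_mul 2
    have i12 : Integrable (fun z : ℝ × ℝ => V z.1 z.2 * a z.1 * b z.2 + V z.1 z.2 * c z.1 * d z.2)
      (mu01.prod mu01) := i1.add i2
    rw [← integral_add i1 i2, ← integral_const_mul, ← integral_sub i12 i3]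
    refine (integral_prod _ (i12.sub i3)).trans ?_
    congr 1; ext x
    congr 1; ext y
    simp only [Pi.sub_apply]
    ring
  rw [I hW (ym_meas hν hq) (ym_meas hν h1) (ym_meas hν h1) (ym_meas hν hq) (ym_meas hν hφ)
    (ym_meas hν hφ) (ym_bd hν hqC) (ym_bd hν h1C) (ym_bd hν h1C) (ym_bd hν hqC) (ym_bd hν hφC)
    (ym_bd hν hφC)] at T
  have hs := ym_supp hC hν hnarrow
  have elim : (∫ x in I01, ∫ y in I01, W x y * ∫ t, (∫ s, |s - t| ^ 2 ∂(ν x)) ∂(ν y)) =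
      ∫ x in I01, ∫ y in I01, W x y * ((∫ t, φ t ^ 2 ∂(ν x)) * (∫ _, (1 : ℝ) ∂(ν y)) +
        (∫ _, (1 : ℝ) ∂(ν x)) * (∫ t, φ t ^ 2 ∂(ν y)) -
        2 * ((∫ t, φ t ∂(ν x)) * (∫ t, φ t ∂(ν y)))) := by
    refine integral_congr_ae ?_
    filter_upwards [hs] with x hx
    refine integral_congr_ae ?_
    filter_upwards [hs] with y hy
    have := hν.2 x
    have := hν.2 y
    have jq : ∀ x, Integrable (fun t => φ t ^ 2) (ν x) := fun x =>
      have := hν.2 x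
      Integrable.of_bound hq.aestronglyMeasurable _ (ae_of_all _ hqC)
    have jφ : ∀ x, Integrable φ (ν x) := fun x =>
      have := hν.2 x
      Integrable.of_bound hφ.aestronglyMeasurable _ (ae_of_all _ hφC)
    have e1 : (∫ t, (∫ s, |s - t| ^ 2 ∂(ν x)) ∂(ν y)) =
        ∫ t, (φ t ^ 2 + (∫ s, φ s ^ 2 ∂(ν x)) - (2 * ∫ s, φ s ∂(ν x)) * φ t) ∂(ν y) := by
      refine integral_congr_ae ?_
      filter_upwards [hy] with t ht
      have e2 : (∫ s, |s - t| ^ 2 ∂(ν x)) =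
          ∫ s, (φ s ^ 2 + φ t ^ 2 - (2 * φ t) * φ s) ∂(ν x) := by
        refine integral_congr_ae ?_
        filter_upwards [hx] with s hs
        rw [hφid s hs, hφid t ht, sq_abs]; ring
      rw [e2, ym_quad (jq x) (jφ x)]
      ring
    simp only [e1]
    rw [ym_quad (jq y) (jφ y)]
    simp only [integral_const, probReal_univ, smul_eq_mul]
    ring
  rw [elim]
  refine T.congr fun n => ?_
  have m1 := hu n
  rw [I (hWs n) (a := fun x => φ (u n x) ^ 2) (b := fun _ => 1) (c := fun _ => 1)
    (d := fun x => φ (u n x) ^ 2) (p := fun x => φ (u n x)) (q := fun x => φ (u n x))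
    (hq.measurable.comp m1) measurable_const measurable_const (hq.measurable.comp m1)
    (hφ.measurable.comp m1) (hφ.measurable.comp m1) (fun _ => hqC _) (by simp) (by simp)
    (fun _ => hqC _) (fun _ => hφC _) (fun _ => hφC _)]
  congr 1; ext x
  congr 1; ext y
  rw [hφid _ (hC n x), hφid _ (hC n y), sq_abs]; ring
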